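/- Let (n_p, n_r, ℓ_p, ℓ_r, S) be a paper assignment instance in which S is blockwise dominant with block identity A ∈ ℝ_{≥0}^{k×k} and block sizes (p_1,…,p_k), (r_1,…,r_k). Assume p_i·ℓ_p ≤ r_i·ℓ_r and Q·r_i ≥ ℓ_p for all i ∈ {1,…,k}. Let f be a strictly concave perturbation function with f′(0) < Dom(A)·f′(1). Then the within-group uniform assignment x*, defined by x*_{p,r} = ℓ_p/r_i if paper p and reviewer r both belong to group i and x*_{p,r} = 0 otherwise, is the unique maximizer of PQuality_f over F(Q); that is, PM(Q,f) = {x*}. -/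

import Mathlib

open Finset

noncomputable section

/-- The feasible set `F(Q)` of randomized assignments. -/
def Feasible (np nr lp lr : ℕ) (Q : ℝ) (x : Fin np → Fin nr → ℝ) : Prop :=
  (∀ p, ∑ r, x p r = (lp : ℝ)) ∧ (∀ r, ∑ p, x p r ≤ (lr : ℝ)) ∧
    ∀ p r, 0 ≤ x p r ∧ x p r ≤ Q

/-- `Quality(x) = Σ_{p,r} x_{p,r} S_{p,r}`. -/
def Quality {np nr : ℕ} (S x : Fin np → Fin nr → ℝ) : ℝ :=
  ∑ p, ∑ r, x p r * S p r

/-- `PQuality_f(x) = Σ_{p,r} S_{p,r} f(x_{p,r})`. -/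
def PQuality {np nr : ℕ} (f : ℝ → ℝ) (S x : Fin np → Fin nr → ℝ) : ℝ :=
  ∑ p, ∑ r, S p r * f (x p r)

/-- `PLRA(Q)`: the set of maximizers of `Quality` over `F(Q)`. -/
def PLRA (np nr lp lr : ℕ) (Q : ℝ) (S : Fin np → Fin nr → ℝ) :
    Set (Fin np → Fin nr → ℝ) :=
  {x | Feasible np nr lp lr Q x ∧
    ∀ y, Feasible np nr lp lr Q y → Quality S y ≤ Quality S x}

/-- `PM(Q,f)`: the set of maximizers of `PQuality_f` over `F(Q)`. -/
def PM (np nr lp lr : ℕ) (Q : ℝ) (f : ℝ → ℝ) (S : Fin np → Fin nr → ℝ) :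
    Set (Fin np → Fin nr → ℝ) :=
  {x | Feasible np nr lp lr Q x ∧
    ∀ y, Feasible np nr lp lr Q y → PQuality f S y ≤ PQuality f S x}

/-- `Maxprob(x) = max_{p,r} x_{p,r}`. -/
def Maxprob {np nr : ℕ} (x : Fin np → Fin nr → ℝ) : ℝ := ⨆ p, ⨆ r, x p r

/-- `AvgMaxp(x) = (1/n_p) Σ_p max_r x_{p,r}`. -/
def AvgMaxp {np nr : ℕ} (x : Fin np → Fin nr → ℝ) : ℝ := (∑ p, ⨆ r, x p r) / np

/-- `Support(x) = #{(p,r) : x_{p,r} > 0}`. -/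
def SupportSize {np nr : ℕ} (x : Fin np → Fin nr → ℝ) : ℕ :=
  {pr : Fin np × Fin nr | 0 < x pr.1 pr.2}.ncard

/-- `Entropy(x) = -Σ_{p,r} x_{p,r} ln x_{p,r}` (with `Real.log 0 = 0`). -/
def Entropy {np nr : ℕ} (x : Fin np → Fin nr → ℝ) : ℝ :=
  -∑ p, ∑ r, x p r * Real.log (x p r)

/-- `L2Norm(x) = sqrt(Σ_{p,r} x_{p,r}²)`. -/
def L2Norm {np nr : ℕ} (x : Fin np → Fin nr → ℝ) : ℝ :=
  Real.sqrt (∑ p, ∑ r, (x p r) ^ 2)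

/-- A perturbation function: `f : [0,1] → [0,1]`, `f 0 = 0`, nondecreasing and concave
on `[0,1]` (differentiability is recorded separately via `HasDerivWithinAt`). -/
def IsPerturbation (f : ℝ → ℝ) : Prop :=
  f 0 = 0 ∧ (∀ t ∈ Set.Icc (0 : ℝ) 1, f t ∈ Set.Icc (0 : ℝ) 1) ∧
    MonotoneOn f (Set.Icc (0 : ℝ) 1) ∧ ConcaveOn ℝ (Set.Icc (0 : ℝ) 1) f

/-- `Dom(A) = sup {α : A i i ≥ α · A i j for all i ≠ j}`. -/
def DomA {k : ℕ} (A : Fin k → Fin k → ℝ) : ℝ :=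
  sSup {α : ℝ | ∀ i j, i ≠ j → α * A i j ≤ A i i}

theorem aux_tangent (f f' : ℝ → ℝ)
    (hstrict : StrictConcaveOn ℝ (Set.Icc (0 : ℝ) 1) f)
    (hderiv : ∀ t ∈ Set.Icc (0 : ℝ) 1, HasDerivWithinAt f (f' t) (Set.Icc (0 : ℝ) 1) t)
    (s t : ℝ) (hs : s ∈ Set.Icc (0 : ℝ) 1) (ht : t ∈ Set.Icc (0 : ℝ) 1) (hst : s ≠ t) :
    f s < f t + f' t * (s - t) := by
  rcases lt_or_gt_of_ne hst with h | h
  · have := hstrict.lt_slope_of_hasDerivWithinAt hs ht h (hderiv t ht)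
    rw [slope_def_field, lt_div_iff₀ (by linarith)] at this
    linarith
  · have := hstrict.slope_lt_of_hasDerivWithinAt ht hs h (hderiv t ht)
    rw [slope_def_field, div_lt_iff₀ (by linarith)] at this
    linarith

theorem aux_ncard {n k : ℕ} (g : Fin n → Fin k) (i : Fin k) :
    {r : Fin n | g r = i}.ncard = (Finset.univ.filter (fun r => g r = i)).card := by
  rw [← Set.ncard_coe_finset]
  simp

theorem aux_dom {k : ℕ} (A : Fin k → Fin k → ℝ) (hA0 : ∀ i j, 0 ≤ A i j)
    (hdiag : ∀ i j, i ≠ j → A i j < A i i) (hD : 0 < DomA A) :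
    (∀ i j, i ≠ j → DomA A * A i j ≤ A i i) ∧ ∀ i, 0 < A i i := by
  have hne : {α : ℝ | ∀ i j, i ≠ j → α * A i j ≤ A i i}.Nonempty :=
    ⟨0, fun i j _ => by simpa using hA0 i i⟩
  refine ⟨fun i j hij => ?_, fun i => ?_⟩
  · rcases (hA0 i j).eq_or_lt with h | h
    · rw [← h]; simpa using hA0 i i
    · rw [← le_div_iff₀ h]
      refine csSup_le hne fun α hα => ?_
      rw [le_div_iff₀ h]
      exact hα i j hij
  · by_cases hj : ∃ j, i ≠ j
    · obtain ⟨j, hj⟩ := hj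
      exact lt_of_le_of_lt (hA0 i j) (hdiag i j hj)
    · exfalso
      push Not at hj
      have : {α : ℝ | ∀ i j, i ≠ j → α * A i j ≤ A i i} = Set.univ := by
        ext α
        simp only [Set.mem_setOf_eq, Set.mem_univ, iff_true]
        intro a b hab
        exact absurd ((hj a).symm.trans (hj b)) hab
      unfold DomA at hD
      rw [this, Real.sSup_univ] at hD
      exact lt_irrefl _ hD

/-- on a blockwise dominant similarity matrix, the within-group
uniform assignment `x*` is the unique maximizer of `PQuality_f` over `F(Q)`,
i.e. `PM(Q,f) = {x*}`. -/
theorem stmt4 (np nr k lp lr : ℕ) (Q : ℝ) (hQ : Q ∈ Set.Icc (0 : ℝ) 1)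
    (S : Fin np → Fin nr → ℝ) (A : Fin k → Fin k → ℝ)
    (pg : Fin np → Fin k) (rg : Fin nr → Fin k)
    (hA0 : ∀ i j, 0 ≤ A i j)
    (hSA : ∀ p r, S p r = A (pg p) (rg r))
    (hdiag : ∀ i j, i ≠ j → A i j < A i i)
    (hload : ∀ i : Fin k,
      {p : Fin np | pg p = i}.ncard * lp ≤ {r : Fin nr | rg r = i}.ncard * lr)
    (hQr : ∀ i : Fin k, (lp : ℝ) ≤ Q * {r : Fin nr | rg r = i}.ncard)
    (f f' : ℝ → ℝ) (hf : IsPerturbation f)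
    (hstrict : StrictConcaveOn ℝ (Set.Icc (0 : ℝ) 1) f)
    (hderiv : ∀ t ∈ Set.Icc (0 : ℝ) 1, HasDerivWithinAt f (f' t) (Set.Icc (0 : ℝ) 1) t)
    (hf' : f' 0 < DomA A * f' 1)
    (xstar : Fin np → Fin nr → ℝ)
    (hxstar : ∀ p r, xstar p r =
      if pg p = rg r then (lp : ℝ) / {r' : Fin nr | rg r' = pg p}.ncard else 0) :
    PM np nr lp lr Q f S = {xstar} := by
  obtain ⟨hf0, hfI, hmono, -⟩ := hf
  have m0 : (0 : ℝ) ∈ Set.Icc (0 : ℝ) 1 := by simp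
  have m1 : (1 : ℝ) ∈ Set.Icc (0 : ℝ) 1 := by simp
  have tan := aux_tangent f f' hstrict hderiv
  have tan' : ∀ s t, s ∈ Set.Icc (0 : ℝ) 1 → t ∈ Set.Icc (0 : ℝ) 1 →
      f s ≤ f t + f' t * (s - t) := by
    intro s t hs ht
    by_cases h : s = t
    · simp [h]
    · exact (tan s t hs ht h).le
  have hf'0 : 0 < f' 0 := by
    have h1 := tan 1 0 m1 m0 one_ne_zero
    have h2 := (hfI 1 m1).1
    rw [hf0] at h1
    linarith
  have hf'1 : 0 ≤ f' 1 := by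
    rw [← (hderiv 1 m1).derivWithin (uniqueDiffOn_Icc zero_lt_one 1 m1)]
    exact hmono.derivWithin_nonneg
  have hmul : 0 < DomA A * f' 1 := hf'0.trans hf'
  have hf'1p : 0 < f' 1 := by
    rcases hf'1.eq_or_lt with h | h
    · rw [← h] at hmul; simp at hmul
    · exact h
  have hD : 0 < DomA A := pos_of_mul_pos_left hmul hf'1
  obtain ⟨hdom, hApos⟩ := aux_dom A hA0 hdiag hD
  have hanti : ∀ c ∈ Set.Icc (0 : ℝ) 1, f' 1 ≤ f' c := by
    intro c hc
    rcases hc.2.eq_or_lt with h | h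
    · rw [h]
    · have h1 := tan' c 1 hc m1
      have h2 := tan' 1 c m1 hc
      have : 0 ≤ (f' c - f' 1) * (1 - c) := by linarith
      have := nonneg_of_mul_nonneg_left this (by linarith)
      linarith
  simp only [aux_ncard] at hload hQr hxstar
  set N : Fin k → ℕ := fun i => (Finset.univ.filter (fun r => rg r = i)).card with hN
  set M : Fin k → ℕ := fun i => (Finset.univ.filter (fun p => pg p = i)).card with hM
  change ∀ i, M i * lp ≤ N i * lr at hload
  change ∀ i, (lp : ℝ) ≤ Q * (N i : ℝ) at hQr
  change ∀ p r, xstar p r = if pg p = rg r then (lp : ℝ) / (N (pg p) : ℝ) else 0 at hxstar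
  have hc0 : ∀ i, 0 ≤ (lp : ℝ) / (N i : ℝ) := fun i => by positivity
  have hcQ : ∀ i, (lp : ℝ) / (N i : ℝ) ≤ Q := by
    intro i
    exact div_le_of_le_mul₀ (by positivity) hQ.1 (hQr i)
  have hcI : ∀ i, (lp : ℝ) / (N i : ℝ) ∈ Set.Icc (0 : ℝ) 1 :=
    fun i => ⟨hc0 i, (hcQ i).trans hQ.2⟩
  have hNc : ∀ i, (N i : ℝ) * ((lp : ℝ) / (N i : ℝ)) = lp := by
    intro i
    by_cases h : (N i : ℝ) = 0
    · have h1 := hQr i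
      rw [h, mul_zero] at h1
      have h2 : (lp : ℝ) = 0 := le_antisymm h1 (by positivity)
      rw [h2, h]; simp
    · field_simp
  have hrow : ∀ p, ∑ r, xstar p r = (lp : ℝ) := by
    intro p
    simp only [hxstar]
    rw [← Finset.sum_filter, Finset.sum_const, nsmul_eq_mul]
    have : (Finset.univ.filter (fun r => pg p = rg r)).card = N (pg p) := by
      simp only [hN, eq_comm]
    rw [this, hNc]
  have hfeas : Feasible np nr lp lr Q xstar := by
    refine ⟨hrow, fun r => ?_, fun p r => ?_⟩
    · have : ∀ p, xstar p r = if pg p = rg r then (lp : ℝ) / (N (rg r) : ℝ) else 0 := by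
        intro p
        rw [hxstar]
        split_ifs with h
        · rw [h]
        · rfl
      simp only [this]
      rw [← Finset.sum_filter, Finset.sum_const, nsmul_eq_mul]
      change (M (rg r) : ℝ) * _ ≤ _
      have hpos : (0 : ℝ) < N (rg r) := by
        have : 0 < N (rg r) := Finset.card_pos.mpr ⟨r, by simp⟩
        exact_mod_cast this
      rw [← mul_div_assoc, div_le_iff₀ hpos, mul_comm (lr : ℝ)]
      exact_mod_cast hload (rg r)
    · rw [hxstar]
      split_ifs
      · exact ⟨hc0 _, hcQ _⟩
      · exact ⟨le_rfl, hQ.1⟩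
  have key : ∀ x, Feasible np nr lp lr Q x → ∀ p r, x p r ≠ xstar p r →
      S p r * f (x p r) < S p r * f (xstar p r) +
        A (pg p) (pg p) * f' ((lp : ℝ) / (N (pg p) : ℝ)) * (x p r - xstar p r) := by
    intro x hx p r hne
    have hxI : x p r ∈ Set.Icc (0 : ℝ) 1 := ⟨(hx.2.2 p r).1, (hx.2.2 p r).2.trans hQ.2⟩
    have hA := hApos (pg p)
    rw [hxstar] at hne ⊢
    rw [hSA]
    split_ifs at hne ⊢ with h
    · rw [← h]
      have := mul_lt_mul_of_pos_left (tan _ _ hxI (hcI (pg p)) hne) hA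
      linarith
    · have hxp : 0 < x p r := lt_of_le_of_ne hxI.1 (Ne.symm hne)
      have h1 := tan' _ _ hxI m0
      rw [hf0] at h1 ⊢
      have hB := hA0 (pg p) (rg r)
      have e1 : A (pg p) (rg r) * f (x p r) ≤ A (pg p) (rg r) * f' 0 * x p r := by
        have := mul_le_mul_of_nonneg_left h1 hB
        linarith
      have e2 : A (pg p) (rg r) * f' 0 < A (pg p) (pg p) * f' 1 := by
        rcases hB.eq_or_lt with h0 | h0
        · rw [← h0, zero_mul]; positivity
        · have a1 := mul_lt_mul_of_pos_left hf' h0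
          have a2 := mul_le_mul_of_nonneg_right (hdom _ _ h) hf'1
          linarith
      have e3 := mul_le_mul_of_nonneg_left (hanti _ (hcI (pg p))) hA.le
      have e4 := mul_lt_mul_of_pos_right (e2.trans_le e3) hxp
      linarith
  have key' : ∀ x, Feasible np nr lp lr Q x → ∀ p r,
      S p r * f (x p r) ≤ S p r * f (xstar p r) +
        A (pg p) (pg p) * f' ((lp : ℝ) / (N (pg p) : ℝ)) * (x p r - xstar p r) := by
    intro x hx p r
    by_cases h : x p r = xstar p r
    · rw [h]; simp
    · exact (key x hx p r h).le
  have hsum : ∀ x, Feasible np nr lp lr Q x → ∑ p, ∑ r, (S p r * f (xstar p r) +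
        A (pg p) (pg p) * f' ((lp : ℝ) / (N (pg p) : ℝ)) * (x p r - xstar p r))
        = PQuality f S xstar := by
    intro x hx
    unfold PQuality
    refine Finset.sum_congr rfl fun p _ => ?_
    rw [Finset.sum_add_distrib, ← Finset.mul_sum, Finset.sum_sub_distrib, hrow, hx.1 p]
    simp
  ext x
  simp only [PM, Set.mem_setOf_eq, Set.mem_singleton_iff]
  constructor
  · rintro ⟨hx, hmax⟩
    by_contra hne
    have : ∃ p r, x p r ≠ xstar p r := by
      by_contra hcon
      push Not at hcon
      exact hne (funext fun p => funext fun r => hcon p r)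
    obtain ⟨p, r, hpr⟩ := this
    have h1 := hmax xstar hfeas
    rw [← hsum x hx] at h1
    refine absurd h1 (not_le.mpr ?_)
    unfold PQuality
    refine Finset.sum_lt_sum (fun q _ => Finset.sum_le_sum fun s _ => key' x hx q s)
      ⟨p, Finset.mem_univ _, ?_⟩
    exact Finset.sum_lt_sum (fun s _ => key' x hx p s) ⟨r, Finset.mem_univ _, key x hx p r hpr⟩
  · rintro rfl
    refine ⟨hfeas, fun y hy => ?_⟩
    rw [← hsum y hy]
    exact Finset.sum_le_sum fun q _ => Finset.sum_le_sum fun s _ => key' y hy q s
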